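/- arXiv:1712.04549 — 2 statements merged into one kernel-verified Lean document; each statement's English description precedes it below -/
import Mathlib

section
/- Let a, b, s, w be positive integers and let k be a nonnegative integer. Let (T,X) be a tree-decomposition of a graph G of width strictly less than w, and let h = (2(a+2)w + 2)b. If there is a cascade η of height h and size s + k in (T,X) such that |⋂_{t ∈ V(T_h)} X_{η(t)}| ≥ k, then either there is a cascade η' of height a and size s + k in (T,X) such that |⋂_{t ∈ V(T_a)} X_{η'(t)}| ≥ k + 1, or there is an injective cascade of height b, size s + k, and common intersection set of size k in (T,X). -/
/-!
Common definitions: minors, widths, connectivity, the specific graphs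
`K4`, `K23`, `C32`, `graphA`, the binary trees `CT_h`, the graphs `𝒫_k`, `𝒬_k`,
the trees `T_h`, homeomorphic embeddings, cascades, and related notions,
following Dang--Thomas, "Minors of two-connected graphs of large path-width".
-/

open SimpleGraph

/-- A minor model of `H` in `G`: branch sets `f w` are nonempty, connected,
pairwise disjoint, and edges of `H` are realized by edges of `G` between branch sets. -/
def IsMinorModel {W V : Type*} (H : SimpleGraph W) (G : SimpleGraph V) (f : W → Set V) : Prop :=
  (∀ w, (f w).Nonempty) ∧
  (∀ w, (G.induce (f w)).Connected) ∧
  (∀ w₁ w₂ : W, w₁ ≠ w₂ → Disjoint (f w₁) (f w₂)) ∧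
  (∀ w₁ w₂ : W, H.Adj w₁ w₂ → ∃ v₁ ∈ f w₁, ∃ v₂ ∈ f w₂, G.Adj v₁ v₂)

/-- `H` is (isomorphic to) a minor of `G`. -/
def IsMinor {W V : Type*} (H : SimpleGraph W) (G : SimpleGraph V) : Prop :=
  ∃ f : W → Set V, IsMinorModel H G f

/-- The complete graph on four vertices. -/
def K4 : SimpleGraph (Fin 4) := ⊤

/-- The complete bipartite graph `K_{2,3}`. -/
def K23 : SimpleGraph (Fin 2 ⊕ Fin 3) := completeBipartiteGraph (Fin 2) (Fin 3)

/-- The graph `A`: a cycle `a₁a₂a₃a₄a₅a₆a₁` plus the edges `a₁a₃`, `a₃a₅`, `a₅a₁`. -/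
def graphA : SimpleGraph (Fin 6) :=
  SimpleGraph.fromEdgeSet
    {s(0, 1), s(1, 2), s(2, 3), s(3, 4), s(4, 5), s(5, 0), s(0, 2), s(2, 4), s(4, 0)}

/-- The graph `C_{3,2}`: two disjoint triangles. -/
def C32 : SimpleGraph (Fin 2 × Fin 3) :=
  SimpleGraph.fromRel (fun u v => u.1 = v.1)

/-- A graph is outerplanar iff it has no `K₄` minor and no `K_{2,3}` minor
(the classical characterization of outerplanarity). -/
def Outerplanar {V : Type*} (G : SimpleGraph V) : Prop :=
  ¬ IsMinor K4 G ∧ ¬ IsMinor K23 G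

/-- `G` is `k`-connected: it has more than `k` vertices and deleting fewer than `k`
vertices leaves a connected graph. -/
def IsKConnected {V : Type*} [Fintype V] (k : ℕ) (G : SimpleGraph V) : Prop :=
  k + 1 ≤ Fintype.card V ∧
  ∀ S : Finset V, S.card < k → (G.induce ((↑S : Set V)ᶜ)).Connected

/-- `(Tr, X)` is a tree-decomposition of `G`: `Tr` is a tree, the bags `X t` cover all
vertices and edges (W1), and whenever `t₂` lies on the path of `Tr` between `t₁` and `t₃`
we have `X t₁ ∩ X t₃ ⊆ X t₂` (W2). -/
def IsTreeDecomp {V T : Type*} (G : SimpleGraph V) (Tr : SimpleGraph T) (X : T → Finset V) :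
    Prop :=
  Tr.IsTree ∧
  (∀ v : V, ∃ t, v ∈ X t) ∧
  (∀ u v : V, G.Adj u v → ∃ t, u ∈ X t ∧ v ∈ X t) ∧
  (∀ (t₁ t₂ t₃ : T) (p : Tr.Walk t₁ t₃), p.IsPath → t₂ ∈ p.support →
    ∀ v : V, v ∈ X t₁ → v ∈ X t₃ → v ∈ X t₂)

/-- A path-decomposition of `G`, with bags indexed by `Fin n`. -/
def IsPathDecomp {V : Type*} (G : SimpleGraph V) {n : ℕ} (X : Fin n → Finset V) : Prop :=
  (∀ v : V, ∃ i, v ∈ X i) ∧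
  (∀ u v : V, G.Adj u v → ∃ i, u ∈ X i ∧ v ∈ X i) ∧
  (∀ i j k : Fin n, i ≤ j → j ≤ k → ∀ v : V, v ∈ X i → v ∈ X k → v ∈ X j)

/-- The path-width of a finite graph: the least `w` such that `G` has a
path-decomposition all of whose bags have at most `w + 1` vertices. -/
noncomputable def pathwidth {V : Type*} [Fintype V] (G : SimpleGraph V) : ℕ :=
  sInf {w | ∃ (n : ℕ) (X : Fin n → Finset V), IsPathDecomp G X ∧ ∀ i, (X i).card ≤ w + 1}

/-- The tree-width of a finite graph: the least `w` such that `G` has a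
tree-decomposition all of whose bags have at most `w + 1` vertices. -/
noncomputable def treewidth {V : Type*} [Fintype V] (G : SimpleGraph V) : ℕ :=
  sInf {w | ∃ (T : Type) (_ : Fintype T) (Tr : SimpleGraph T) (X : T → Finset V),
    IsTreeDecomp G Tr X ∧ ∀ t, (X t).card ≤ w + 1}

/-- Vertices of the binary tree `CT_h`: paths from the root, recorded as reversed
lists of left/right moves, of length at most `h`. -/
abbrev CTVert (h : ℕ) := {l : List Bool // l.length ≤ h}

/-- The binary tree `CT_h` of height `h`. -/
def CTgraph (h : ℕ) : SimpleGraph (CTVert h) :=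
  SimpleGraph.fromEdgeSet
    {e | ∃ (b : Bool) (σ : List Bool) (hσ : σ.length < h),
      e = s((⟨σ, le_of_lt hσ⟩ : CTVert h), (⟨b :: σ, by simpa using hσ⟩ : CTVert h))}

/-- The graph `𝒫_k`: the binary tree `CT_k` together with one extra vertex (`none`)
adjacent to every leaf of `CT_k`. -/
def Pgraph (k : ℕ) : SimpleGraph (Option (CTVert k)) :=
  SimpleGraph.fromEdgeSet
    ({e | ∃ (b : Bool) (σ : List Bool) (hσ : σ.length < k),
        e = s(some (⟨σ, le_of_lt hσ⟩ : CTVert k), some (⟨b :: σ, by simpa using hσ⟩ : CTVert k))} ∪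
     {e | ∃ l : CTVert k, l.1.length = k ∧ e = s(none, some l)})

/-- Vertices of `𝒬_k`: the two base vertices of the root triangle (`Sum.inl false` and
`Sum.inl true`), together with one apex vertex for each node of the complete binary tree
of depth `< k` (recorded as a reversed list of moves). -/
abbrev QVert (k : ℕ) := Bool ⊕ {l : List Bool // l.length < k}

/-- The two ends of the base edge of the copy of the triangle at node `σ` of `𝒬_k`. -/
def qbase (k : ℕ) : List Bool → QVert k × QVert k
  | [] => (Sum.inl false, Sum.inl true)
  | b :: σ =>
      ((if b then (qbase k σ).2 else (qbase k σ).1),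
        if h : σ.length < k then Sum.inr ⟨σ, h⟩ else Sum.inl false)

/-- The graph `𝒬_k`, built from triangles as in the recursive definition: the triangle at
node `σ` consists of the base edge `qbase k σ` together with the apex vertex `Sum.inr σ`;
the base edge of `𝒬_k` is `s(Sum.inl false, Sum.inl true)`. -/
def Qgraph (k : ℕ) : SimpleGraph (QVert k) :=
  SimpleGraph.fromEdgeSet
    ({s(Sum.inl false, Sum.inl true)} ∪
     {e | ∃ (σ : List Bool) (h : σ.length < k),
        e = s(Sum.inr ⟨σ, h⟩, (qbase k σ).1) ∨ e = s(Sum.inr ⟨σ, h⟩, (qbase k σ).2)})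

/-- The minor vertices of the tree `T_h` (one for each string of length `≤ h`). -/
abbrev MVert (h : ℕ) := {l : List Bool // l.length ≤ h}

/-- The major vertices of the tree `T_h` (one for each string of length `≤ h - 1`). -/
abbrev JVert (h : ℕ) := {l : List Bool // l.length + 1 ≤ h}

/-- Vertices of the tree `T_h` (obtained from `CT_h` by subdividing every edge not incident
with a degree-one vertex and adding the minor root). -/
abbrev TVert (h : ℕ) := MVert h ⊕ JVert h

/-- The tree `T_h`: each major vertex `σ` is adjacent to the minor vertices `σ` (its parent),
`false :: σ` (its left neighbor) and `true :: σ` (its right neighbor). -/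
def Tgraph (h : ℕ) : SimpleGraph (TVert h) :=
  SimpleGraph.fromEdgeSet
    {e | ∃ (σ : List Bool) (hσ : σ.length + 1 ≤ h),
      e = s(Sum.inr ⟨σ, hσ⟩, Sum.inl ⟨σ, Nat.le_of_succ_le hσ⟩) ∨
      ∃ b : Bool, e = s(Sum.inr ⟨σ, hσ⟩, Sum.inl ⟨b :: σ, by simpa using hσ⟩)}

/-- A homeomorphic embedding of `TA` into `TB`: an injection such that for any two edges of
`TA` sharing an end `t`, the corresponding paths of `TB` are edge-disjoint. -/
def IsHomeoEmb {A B : Type*} (TA : SimpleGraph A) (TB : SimpleGraph B) (η : A → B) : Prop :=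
  Function.Injective η ∧
  ∀ ⦃t t₁ t₂ : A⦄, TA.Adj t t₁ → TA.Adj t t₂ → t₁ ≠ t₂ →
    ∀ (p₁ : TB.Walk (η t) (η t₁)) (p₂ : TB.Walk (η t) (η t₂)),
      p₁.IsPath → p₂.IsPath → ∀ e ∈ p₁.edges, e ∉ p₂.edges

/-- `v` lies in the span of `η`: it lies on a path of `TB` between two vertices in the
image of `η`. -/
def inSpan {A B : Type*} (TB : SimpleGraph B) (η : A → B) (v : B) : Prop :=
  ∃ (a₁ a₂ : A) (p : TB.Walk (η a₁) (η a₂)), p.IsPath ∧ v ∈ p.support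

/-- A cascade of height `h` and size `s` in the tree-decomposition `(Tr, X)`:
a homeomorphic embedding of `T_h` with `|X (η t)| = s` for every minor vertex `t`
and `|X t| ≥ s` for every `t` in the span. -/
def IsCascade {V T : Type*} (Tr : SimpleGraph T) (X : T → Finset V) (h s : ℕ)
    (η : TVert h → T) : Prop :=
  IsHomeoEmb (Tgraph h) Tr η ∧
  (∀ l : MVert h, (X (η (Sum.inl l))).card = s) ∧
  (∀ t : T, inSpan Tr η t → s ≤ (X t).card)

/-- An injective cascade with common intersection set `I`. -/
def IsInjectiveCascade {V T : Type*} (Tr : SimpleGraph T) (X : T → Finset V) (h s : ℕ)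
    (η : TVert h → T) (I : Finset V) : Prop :=
  IsCascade Tr X h s η ∧ I.card < s ∧
  ∀ t t' : TVert h, t ≠ t' → ((X (η t) : Set V) ∩ (X (η t') : Set V)) = (I : Set V)

/-- A family of `s` disjoint paths in `G \ I` (a linkage). -/
def IsLinkage {V : Type*} (G : SimpleGraph V) (I : Finset V) {s : ℕ} {x y : Fin s → V}
    (P : ∀ i : Fin s, G.Walk (x i) (y i)) : Prop :=
  (∀ i, (P i).IsPath) ∧
  (∀ i, ∀ v ∈ (P i).support, v ∉ I) ∧
  (∀ i j, i ≠ j → ∀ v ∈ (P i).support, v ∉ (P j).support)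

/-- An ordered cascade: an injective cascade of size `s + |I|` with common intersection set
`I`, together with orderings `ξ t : Fin s → X (η t) \ I` of the bags at minor vertices, such
that at every major vertex there are left and right linkages connecting corresponding
vertices. -/
def IsOrderedCascade {V T : Type*} (G : SimpleGraph V) (Tr : SimpleGraph T)
    (X : T → Finset V) (h s : ℕ) (η : TVert h → T) (I : Finset V)
    (ξ : MVert h → Fin s → V) : Prop :=
  IsInjectiveCascade Tr X h (s + I.card) η I ∧
  (∀ t : MVert h, Function.Injective (ξ t) ∧
    Set.range (ξ t) = (X (η (Sum.inl t)) : Set V) \ (I : Set V)) ∧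
  ∀ (σ : List Bool) (hσ : σ.length + 1 ≤ h),
    (∃ P : ∀ i : Fin s,
        G.Walk (ξ ⟨σ, Nat.le_of_succ_le hσ⟩ i) (ξ ⟨false :: σ, by simpa using hσ⟩ i),
      IsLinkage G I P) ∧
    (∃ Q : ∀ i : Fin s,
        G.Walk (ξ ⟨σ, Nat.le_of_succ_le hσ⟩ i) (ξ ⟨true :: σ, by simpa using hσ⟩ i),
      IsLinkage G I Q)

/-- The vertex set of the `η`-torso at the major vertex `σ` of `T_h`: the union of the bags
`X t - I` over all `t` such that the path in `Tr` from `t` to `η σ` contains none of the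
images of the three minor neighbors of `σ` as an internal vertex. -/
def torsoSet {V T : Type*} (Tr : SimpleGraph T) (X : T → Finset V) {h : ℕ}
    (η : TVert h → T) (I : Finset V) (σ : List Bool) (hσ : σ.length + 1 ≤ h) : Set V :=
  {v | v ∉ I ∧ ∃ t : T,
    (∀ p : Tr.Walk t (η (Sum.inr ⟨σ, hσ⟩)), p.IsPath →
      ∀ u : T,
        (u = η (Sum.inl ⟨σ, Nat.le_of_succ_le hσ⟩) ∨
         u = η (Sum.inl ⟨false :: σ, by simpa using hσ⟩) ∨
         u = η (Sum.inl ⟨true :: σ, by simpa using hσ⟩)) →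
        u ∈ p.support → u = t ∨ u = η (Sum.inr ⟨σ, hσ⟩)) ∧
    v ∈ X t}

/-- `H` is a tripod in `G` with all vertices in `S`, center `c` and feet `f₁, f₂, f₃`:
the union of three paths from `c` to the feet, pairwise disjoint except for `c`,
at least two of which have length at least one. -/
def IsTripodOn {V : Type*} (G : SimpleGraph V) (S : Set V) (H : G.Subgraph)
    (c f₁ f₂ f₃ : V) : Prop :=
  ∃ (W₁ : G.Walk c f₁) (W₂ : G.Walk c f₂) (W₃ : G.Walk c f₃),
    W₁.IsPath ∧ W₂.IsPath ∧ W₃.IsPath ∧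
    (∀ v ∈ W₁.support, v ∈ S) ∧ (∀ v ∈ W₂.support, v ∈ S) ∧ (∀ v ∈ W₃.support, v ∈ S) ∧
    (∀ v, v ∈ W₁.support → v ∈ W₂.support → v = c) ∧
    (∀ v, v ∈ W₁.support → v ∈ W₃.support → v = c) ∧
    (∀ v, v ∈ W₂.support → v ∈ W₃.support → v = c) ∧
    ((1 ≤ W₁.length ∧ 1 ≤ W₂.length) ∨ (1 ≤ W₁.length ∧ 1 ≤ W₃.length) ∨
      (1 ≤ W₂.length ∧ 1 ≤ W₃.length)) ∧
    H = W₁.toSubgraph ⊔ W₂.toSubgraph ⊔ W₃.toSubgraph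

/-- The major vertex `σ` has property `A_{ij}` in the ordered cascade `η` with orderings
`ξ`: there are two disjoint tripods in the `η`-torso at `σ`, with feet as prescribed. -/
def HasPropA {V T : Type*} (G : SimpleGraph V) (Tr : SimpleGraph T) (X : T → Finset V)
    {h s : ℕ} (η : TVert h → T) (I : Finset V) (ξ : MVert h → Fin s → V)
    (σ : List Bool) (hσ : σ.length + 1 ≤ h) (i j : Fin s) : Prop :=
  ∃ (Li Lj : G.Subgraph) (ci cj : V),
    (∃ m₂ m₃ : Fin s, (m₂ = i ∨ m₂ = j) ∧ (m₃ = i ∨ m₃ = j) ∧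
      IsTripodOn G (torsoSet Tr X η I σ hσ) Li ci
        (ξ ⟨σ, Nat.le_of_succ_le hσ⟩ i)
        (ξ ⟨false :: σ, by simpa using hσ⟩ m₂)
        (ξ ⟨true :: σ, by simpa using hσ⟩ m₃)) ∧
    (∃ m₂ m₃ : Fin s, (m₂ = i ∨ m₂ = j) ∧ (m₃ = i ∨ m₃ = j) ∧
      IsTripodOn G (torsoSet Tr X η I σ hσ) Lj cj
        (ξ ⟨σ, Nat.le_of_succ_le hσ⟩ j)
        (ξ ⟨false :: σ, by simpa using hσ⟩ m₂)
        (ξ ⟨true :: σ, by simpa using hσ⟩ m₃)) ∧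
    Disjoint Li.verts Lj.verts

/-- The major vertex `σ` has property `B_{ij}`: there are two tripods `L_i`, `L_j` in the
`η`-torso at `σ`, with feet `v_{m,1}, v_{m,2}, v_{m,3}` where `{v_{i,y}, v_{j,y}}` equals
`{ξ_{t_y} i, ξ_{t_y} j}` for each `y`, which intersect exactly in a path that is the
intersection of the branch of `L_i` to `v_{i,3}` and the branch of `L_j` to `v_{j,2}`,
and which avoids both centers. -/
def HasPropB {V T : Type*} (G : SimpleGraph V) (Tr : SimpleGraph T) (X : T → Finset V)
    {h s : ℕ} (η : TVert h → T) (I : Finset V) (ξ : MVert h → Fin s → V)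
    (σ : List Bool) (hσ : σ.length + 1 ≤ h) (i j : Fin s) : Prop :=
  ∃ (vi vj : Fin 3 → V) (ci cj : V)
    (Wi : ∀ y : Fin 3, G.Walk ci (vi y)) (Wj : ∀ y : Fin 3, G.Walk cj (vj y)),
    (∀ y : Fin 3, ({vi y, vj y} : Set V) =
      {(![ξ ⟨σ, Nat.le_of_succ_le hσ⟩,
          ξ ⟨false :: σ, by simpa using hσ⟩,
          ξ ⟨true :: σ, by simpa using hσ⟩] : Fin 3 → Fin s → V) y i,
       (![ξ ⟨σ, Nat.le_of_succ_le hσ⟩,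
          ξ ⟨false :: σ, by simpa using hσ⟩,
          ξ ⟨true :: σ, by simpa using hσ⟩] : Fin 3 → Fin s → V) y j}) ∧
    (∀ y, (Wi y).IsPath) ∧ (∀ y, (Wj y).IsPath) ∧
    (∀ y, ∀ v ∈ (Wi y).support, v ∈ torsoSet Tr X η I σ hσ) ∧
    (∀ y, ∀ v ∈ (Wj y).support, v ∈ torsoSet Tr X η I σ hσ) ∧
    (∀ y y' : Fin 3, y ≠ y' → ∀ v, v ∈ (Wi y).support → v ∈ (Wi y').support → v = ci) ∧
    (∀ y y' : Fin 3, y ≠ y' → ∀ v, v ∈ (Wj y).support → v ∈ (Wj y').support → v = cj) ∧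
    ((1 ≤ (Wi 0).length ∧ 1 ≤ (Wi 1).length) ∨ (1 ≤ (Wi 0).length ∧ 1 ≤ (Wi 2).length) ∨
      (1 ≤ (Wi 1).length ∧ 1 ≤ (Wi 2).length)) ∧
    ((1 ≤ (Wj 0).length ∧ 1 ≤ (Wj 1).length) ∨ (1 ≤ (Wj 0).length ∧ 1 ≤ (Wj 2).length) ∨
      (1 ≤ (Wj 1).length ∧ 1 ≤ (Wj 2).length)) ∧
    (((Wi 0).toSubgraph ⊔ (Wi 1).toSubgraph ⊔ (Wi 2).toSubgraph) ⊓
      ((Wj 0).toSubgraph ⊔ (Wj 1).toSubgraph ⊔ (Wj 2).toSubgraph)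
        = (Wi 2).toSubgraph ⊓ (Wj 1).toSubgraph) ∧
    ∃ (x y : V) (p : G.Walk x y), p.IsPath ∧
      (Wi 2).toSubgraph ⊓ (Wj 1).toSubgraph = p.toSubgraph ∧
      ci ∉ p.support ∧ cj ∉ p.support

/-- The major vertex `σ` has property `AB_{ij}`: in the `η`-torso at `σ` there are disjoint
paths `L_i, L_j` from `ξ_{t₁}(m)` to `ξ_{t₂}(m)` and disjoint paths `R_i, R_j` from
`ξ_{t₁}(m)` to `ξ_{t₃}(m)`, for `m ∈ {i, j}`. -/
def HasPropAB {V T : Type*} (G : SimpleGraph V) (Tr : SimpleGraph T) (X : T → Finset V)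
    {h s : ℕ} (η : TVert h → T) (I : Finset V) (ξ : MVert h → Fin s → V)
    (σ : List Bool) (hσ : σ.length + 1 ≤ h) (i j : Fin s) : Prop :=
  ∃ (Li : G.Walk (ξ ⟨σ, Nat.le_of_succ_le hσ⟩ i) (ξ ⟨false :: σ, by simpa using hσ⟩ i))
    (Lj : G.Walk (ξ ⟨σ, Nat.le_of_succ_le hσ⟩ j) (ξ ⟨false :: σ, by simpa using hσ⟩ j))
    (Ri : G.Walk (ξ ⟨σ, Nat.le_of_succ_le hσ⟩ i) (ξ ⟨true :: σ, by simpa using hσ⟩ i))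
    (Rj : G.Walk (ξ ⟨σ, Nat.le_of_succ_le hσ⟩ j) (ξ ⟨true :: σ, by simpa using hσ⟩ j)),
    Li.IsPath ∧ Lj.IsPath ∧ Ri.IsPath ∧ Rj.IsPath ∧
    (∀ v ∈ Li.support, v ∈ torsoSet Tr X η I σ hσ) ∧
    (∀ v ∈ Lj.support, v ∈ torsoSet Tr X η I σ hσ) ∧
    (∀ v ∈ Ri.support, v ∈ torsoSet Tr X η I σ hσ) ∧
    (∀ v ∈ Rj.support, v ∈ torsoSet Tr X η I σ hσ) ∧
    (∀ v ∈ Li.support, v ∉ Lj.support) ∧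
    (∀ v ∈ Ri.support, v ∉ Rj.support)

/-- A monotone homeomorphic embedding `T_a ↪ T_h`: the minor root maps to the minor root,
and for every major vertex with trinity `(t₁, t₂, t₃)`, the images of `t₂` and `t₃` are the
left and right neighbors of the (major) image of the vertex. -/
def IsMonotoneEmb (a h : ℕ) (γ : TVert a → TVert h) : Prop :=
  IsHomeoEmb (Tgraph a) (Tgraph h) γ ∧
  γ (Sum.inl ⟨[], Nat.zero_le a⟩) = Sum.inl ⟨[], Nat.zero_le h⟩ ∧
  ∀ (σ : List Bool) (hσ : σ.length + 1 ≤ a),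
    ∃ (τ : List Bool) (hτ : τ.length + 1 ≤ h),
      γ (Sum.inr ⟨σ, hσ⟩) = Sum.inr ⟨τ, hτ⟩ ∧
      γ (Sum.inl ⟨false :: σ, by simpa using hσ⟩) = Sum.inl ⟨false :: τ, by simpa using hτ⟩ ∧
      γ (Sum.inl ⟨true :: σ, by simpa using hσ⟩) = Sum.inl ⟨true :: τ, by simpa using hτ⟩

/-- `y` lies on every path from `x` to `z`. -/
def TBtw {T : Type} (Tr : SimpleGraph T) (x y z : T) : Prop :=
  ∀ p : Tr.Walk x z, p.IsPath → y ∈ p.support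

theorem TBtw.symm {T : Type} {Tr : SimpleGraph T} {x y z : T} (h : TBtw Tr x y z) :
    TBtw Tr z y x := by
  intro p hp
  have := h p.reverse hp.reverse
  simpa using this

theorem TBtw.ne {T : Type} {Tr : SimpleGraph T} {x y z : T} (h : TBtw Tr x y z) (hxy : x ≠ y) :
    x ≠ z := by
  rintro rfl
  have := h Walk.nil (by simp)
  simp at this
  exact hxy this.symm

theorem tbtw_left {T : Type} {Tr : SimpleGraph T} (x z : T) : TBtw Tr x x z :=
  fun p _ => p.start_mem_support

theorem tbtw_right {T : Type} {Tr : SimpleGraph T} (x z : T) : TBtw Tr x z z :=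
  fun p _ => p.end_mem_support

theorem path_uniq {T : Type} {Tr : SimpleGraph T} (hT : Tr.IsTree) {x y : T}
    {p q : Tr.Walk x y} (hp : p.IsPath) (hq : q.IsPath) : p = q :=
  (hT.existsUnique_path x y).unique hp hq

theorem tbtw_of_append {T : Type} {Tr : SimpleGraph T} (hT : Tr.IsTree) {x y z : T}
    (p : Tr.Walk x y) (q : Tr.Walk y z) (h : (p.append q).IsPath) : TBtw Tr x y z := by
  intro r hr
  rw [path_uniq hT hr h]
  simp

theorem append_of_tbtw {T : Type} {Tr : SimpleGraph T} (hT : Tr.IsTree) {x y z : T}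
    (p : Tr.Walk x y) (q : Tr.Walk y z) (hp : p.IsPath) (hq : q.IsPath)
    (h : TBtw Tr x y z) : (p.append q).IsPath := by
  classical
  obtain ⟨r, hr, -⟩ := hT.existsUnique_path x z
  have hy := h r hr
  have h1 := path_uniq hT hp (hr.takeUntil hy)
  have h2 := path_uniq hT hq (hr.dropUntil hy)
  rw [h1, h2, Walk.take_spec]
  exact hr

theorem tbtw_iff {T : Type} {Tr : SimpleGraph T} (hT : Tr.IsTree) {x y z : T}
    (p : Tr.Walk x y) (q : Tr.Walk x z) (hp : p.IsPath) (hq : q.IsPath) :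
    (∀ e ∈ p.edges, e ∉ q.edges) ↔ TBtw Tr y x z := by
  constructor
  · intro h
    apply tbtw_of_append hT p.reverse q
    rw [hT.isAcyclic.isPath_iff_isTrail, Walk.isTrail_def, Walk.edges_append,
      List.nodup_append]
    refine ⟨by simpa using hp.isTrail.edges_nodup, hq.isTrail.edges_nodup, ?_⟩
    intro e he e' he' hee
    subst hee
    exact h e (by simpa using he) he'
  · intro h e he heq
    have := (append_of_tbtw hT p.reverse q hp.reverse hq h).isTrail.edges_nodup
    rw [Walk.edges_append, List.nodup_append] at this
    exact this.2.2 e (by simpa using he) e heq rfl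

theorem tbtw_trans {T : Type} {Tr : SimpleGraph T} (hT : Tr.IsTree) {a b c d : T}
    (h1 : TBtw Tr a b c) (h2 : TBtw Tr b c d) (hbc : b ≠ c) : TBtw Tr a b d := by
  obtain ⟨p, hp, -⟩ := hT.existsUnique_path a b
  obtain ⟨q, hq, -⟩ := hT.existsUnique_path b c
  obtain ⟨r, hr, -⟩ := hT.existsUnique_path c d
  apply tbtw_of_append hT p (q.append r)
  have e1 := append_of_tbtw hT p q hp hq h1
  have e2 := append_of_tbtw hT q r hq hr h2
  rw [hT.isAcyclic.isPath_iff_isChain] at e1 e2 ⊢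
  rw [Walk.edges_append] at e1 e2 ⊢
  rw [Walk.edges_append]
  rw [← List.append_assoc]
  refine e1.append_overlap e2 ?_
  intro h
  apply hbc
  cases q with
  | nil => rfl
  | cons _ _ => simp at h

theorem tbtw_trans' {T : Type} {Tr : SimpleGraph T} (hT : Tr.IsTree) {a b c d : T}
    (h1 : TBtw Tr a b c) (h2 : TBtw Tr b c d) (hbc : b ≠ c) : TBtw Tr a c d :=
  (tbtw_trans hT h2.symm h1.symm hbc.symm).symm

theorem path_lemma {A T : Type} {H : SimpleGraph A} {Tr : SimpleGraph T} (hT : Tr.IsTree)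
    (η : A → T) (hne : ∀ x y, H.Adj x y → η x ≠ η y)
    (hloc : ∀ t t₁ t₂, H.Adj t t₁ → H.Adj t t₂ → t₁ ≠ t₂ → TBtw Tr (η t₁) (η t) (η t₂))
    {v : A} : ∀ {u u' : A} (hu : H.Adj u u') (q : H.Walk u' v), (Walk.cons hu q).IsPath →
      TBtw Tr (η u) (η u') (η v) := by
  intro u u' hu q
  induction q generalizing u with
  | nil => intro _; exact tbtw_right _ _
  | cons h r ih =>
    intro hp
    rw [Walk.cons_isPath_iff] at hp
    have h1 := ih h hp.1
    have hh : u ≠ _ := fun he => hp.2 (by rw [he, Walk.support_cons]; exact List.mem_cons_of_mem _ r.start_mem_support)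
    exact tbtw_trans hT (hloc _ _ _ hu.symm h hh) h1 (hne _ _ h)

theorem path_lemma2 {A T : Type} {H : SimpleGraph A} {Tr : SimpleGraph T} (hT : Tr.IsTree)
    (hH : H.Connected)
    (η : A → T) (hne : ∀ x y, H.Adj x y → η x ≠ η y)
    (hloc : ∀ t t₁ t₂, H.Adj t t₁ → H.Adj t t₂ → t₁ ≠ t₂ → TBtw Tr (η t₁) (η t) (η t₂))
    {u v : A} (huv : u ≠ v) : ∃ u', H.Adj u u' ∧ TBtw Tr (η u) (η u') (η v) := by
  obtain ⟨p, hp⟩ := (hH u v).exists_isPath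
  cases p with
  | nil => exact absurd rfl huv
  | cons h q => exact ⟨_, h, path_lemma hT η hne hloc h q hp⟩

theorem inj_of_loc {A T : Type} {H : SimpleGraph A} {Tr : SimpleGraph T} (hT : Tr.IsTree)
    (hH : H.Connected)
    (η : A → T) (hne : ∀ x y, H.Adj x y → η x ≠ η y)
    (hloc : ∀ t t₁ t₂, H.Adj t t₁ → H.Adj t t₂ → t₁ ≠ t₂ → TBtw Tr (η t₁) (η t) (η t₂)) :
    Function.Injective η := by
  intro u v huv
  by_contra hne'
  obtain ⟨u', h1, h2⟩ := path_lemma2 hT hH η hne hloc hne'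
  exact h2.ne (hne _ _ h1) huv

theorem tgraph_adj_inr {h : ℕ} (σ : JVert h) (y : TVert h) (hy : (Tgraph h).Adj (Sum.inr σ) y) :
    ∃ l : MVert h, y = Sum.inl l ∧ (l.1 = σ.1 ∨ ∃ b, l.1 = b :: σ.1) := by
  obtain ⟨σ, hσ⟩ := σ
  simp only [Tgraph, fromEdgeSet_adj, Set.mem_ofPred_eq] at hy
  obtain ⟨⟨τ, hτ, h1 | ⟨b, h1⟩⟩, -⟩ := hy
  · rcases y with l | l <;> simp at h1
    exact ⟨l, rfl, Or.inl (by simp [h1.2, h1.1])⟩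
  · rcases y with l | l <;> simp at h1
    exact ⟨l, rfl, Or.inr ⟨b, by simp [h1.2, h1.1]⟩⟩

theorem tgraph_adj_inl {h : ℕ} (l : MVert h) (y : TVert h) (hy : (Tgraph h).Adj (Sum.inl l) y) :
    ∃ σ : JVert h, y = Sum.inr σ ∧ (l.1 = σ.1 ∨ ∃ b, l.1 = b :: σ.1) := by
  rcases y with m | σ
  · exfalso
    simp only [Tgraph, fromEdgeSet_adj, Set.mem_ofPred_eq] at hy
    obtain ⟨⟨τ, hτ, h1 | ⟨b, h1⟩⟩, -⟩ := hy <;> simp at h1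
  · obtain ⟨l', h1, h2⟩ := tgraph_adj_inr σ _ hy.symm
    cases h1
    exact ⟨σ, rfl, h2⟩

theorem tgraph_adj_mj {h : ℕ} (σ : List Bool) (hσ : σ.length + 1 ≤ h) (hσ' : σ.length ≤ h) :
    (Tgraph h).Adj (Sum.inl ⟨σ, hσ'⟩) (Sum.inr ⟨σ, hσ⟩) := by
  simp only [Tgraph, fromEdgeSet_adj, Set.mem_ofPred_eq]
  exact ⟨⟨σ, hσ, Or.inl (Sym2.eq_swap)⟩, by simp⟩

theorem tgraph_adj_jm {h : ℕ} (b : Bool) (σ : List Bool) (hσ : σ.length + 1 ≤ h)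
    (hσ' : (b :: σ).length ≤ h) :
    (Tgraph h).Adj (Sum.inr ⟨σ, hσ⟩) (Sum.inl ⟨b :: σ, hσ'⟩) := by
  simp only [Tgraph, fromEdgeSet_adj, Set.mem_ofPred_eq]
  exact ⟨⟨σ, hσ, Or.inr ⟨b, rfl⟩⟩, by simp⟩

theorem tgraph_connected (h : ℕ) : (Tgraph h).Connected := by
  have key : ∀ (σ : List Bool) (hσ : σ.length ≤ h),
      (Tgraph h).Reachable (Sum.inl ⟨[], Nat.zero_le h⟩) (Sum.inl ⟨σ, hσ⟩) := by
    intro σ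
    induction σ with
    | nil => intro _; exact Reachable.refl _
    | cons b σ ih =>
      intro hσ
      have h1 : σ.length + 1 ≤ h := by simpa using hσ
      exact ((ih (by omega)).trans (tgraph_adj_mj σ h1 (by omega)).reachable).trans
        (tgraph_adj_jm b σ h1 hσ).reachable
  have key2 : ∀ x : TVert h, (Tgraph h).Reachable (Sum.inl ⟨[], Nat.zero_le h⟩) x := by
    rintro (⟨σ, hσ⟩ | ⟨σ, hσ⟩)
    · exact key σ hσ
    · exact (key σ (by omega)).trans (tgraph_adj_mj σ hσ (by omega)).reachable
  exact { preconnected := fun x y => (key2 x).symm.trans (key2 y)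
          nonempty := ⟨Sum.inl ⟨[], Nat.zero_le h⟩⟩ }

/-- Child relation in the infinite version of `T_h`, restricted to height `h`. -/
inductive Chd (h : ℕ) : List Bool ⊕ List Bool → List Bool ⊕ List Bool → Prop
  | mj (σ : List Bool) (hσ : σ.length + 1 ≤ h) : Chd h (Sum.inl σ) (Sum.inr σ)
  | jm (b : Bool) (σ : List Bool) (hσ : σ.length + 1 ≤ h) : Chd h (Sum.inr σ) (Sum.inl (b :: σ))

/-- Local properties of an embedding. -/
structure Loc {T : Type} (Tr : SimpleGraph T) (h : ℕ) (N : List Bool ⊕ List Bool → T) : Prop where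
  ne : ∀ x y, Chd h x y → N x ≠ N y
  ch : ∀ x y z, Chd h x y → Chd h y z → TBtw Tr (N x) (N y) (N z)
  sib : ∀ m x y, Chd h m x → Chd h m y → x ≠ y → TBtw Tr (N x) (N m) (N y)

/-- Extension of an embedding by junk values. -/
def cext {T : Type} {h : ℕ} (η : TVert h → T) : List Bool ⊕ List Bool → T
  | Sum.inl σ => if hσ : σ.length ≤ h then η (Sum.inl ⟨σ, hσ⟩) else η (Sum.inl ⟨[], Nat.zero_le h⟩)
  | Sum.inr σ => if hσ : σ.length + 1 ≤ h then η (Sum.inr ⟨σ, hσ⟩)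
      else η (Sum.inl ⟨[], Nat.zero_le h⟩)

theorem chd_lift {h : ℕ} {x y : List Bool ⊕ List Bool} (hc : Chd h x y) :
    ∃ x' y' : TVert h, (Tgraph h).Adj x' y' ∧ x = Sum.map Subtype.val Subtype.val x' ∧
      y = Sum.map Subtype.val Subtype.val y' := by
  cases hc with
  | mj σ hσ => exact ⟨_, _, tgraph_adj_mj σ hσ (by omega), rfl, rfl⟩
  | jm b σ hσ => exact ⟨_, _, tgraph_adj_jm b σ hσ (by simpa using hσ), rfl, rfl⟩

theorem cext_map {T : Type} {h : ℕ} (η : TVert h → T) (x : TVert h) :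
    cext η (Sum.map Subtype.val Subtype.val x) = η x := by
  rcases x with ⟨σ, hσ⟩ | ⟨σ, hσ⟩
  · simp [cext, hσ]
  · simp only [cext, Sum.map_inr]; rw [dif_pos hσ]

theorem map_inj {h : ℕ} : Function.Injective
    (Sum.map Subtype.val Subtype.val : TVert h → List Bool ⊕ List Bool) :=
  Sum.map_injective.2 ⟨Subtype.val_injective, Subtype.val_injective⟩

theorem chd_asymm {h : ℕ} {x y z : List Bool ⊕ List Bool} (h1 : Chd h x y) (h2 : Chd h y z) :
    x ≠ z := by
  cases h1 <;> cases h2 <;> simp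

theorem loc_ext {T : Type} {Tr : SimpleGraph T} (hT : Tr.IsTree) {h : ℕ} (η : TVert h → T)
    (hη : IsHomeoEmb (Tgraph h) Tr η) : Loc Tr h (cext η) := by
  have hloc : ∀ t t₁ t₂, (Tgraph h).Adj t t₁ → (Tgraph h).Adj t t₂ → t₁ ≠ t₂ →
      TBtw Tr (η t₁) (η t) (η t₂) := by
    intro t t₁ t₂ h1 h2 h3
    obtain ⟨p, hp, -⟩ := hT.existsUnique_path (η t) (η t₁)
    obtain ⟨q, hq, -⟩ := hT.existsUnique_path (η t) (η t₂)
    exact (tbtw_iff hT p q hp hq).1 (hη.2 h1 h2 h3 p q hp hq)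
  refine ⟨?_, ?_, ?_⟩
  · intro x y hc
    obtain ⟨x', y', h1, rfl, rfl⟩ := chd_lift hc
    rw [cext_map, cext_map]
    exact fun he => h1.ne (hη.1 he)
  · intro x y z h1 h2
    have h3 := chd_asymm h1 h2
    obtain ⟨x', y', g1, rfl, rfl⟩ := chd_lift h1
    obtain ⟨y'', z', g2, e, rfl⟩ := chd_lift h2
    have e := map_inj e
    subst e
    rw [cext_map, cext_map, cext_map]
    exact hloc _ _ _ g1.symm g2 (fun e => h3 (by rw [e]))
  · intro y x z h1 h2 h3
    obtain ⟨y', x', g1, rfl, rfl⟩ := chd_lift h1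
    obtain ⟨y'', z', g2, e, rfl⟩ := chd_lift h2
    have e := map_inj e
    subst e
    rw [cext_map, cext_map, cext_map]
    exact hloc _ _ _ g1 g2 (fun e => h3 (by rw [e]))

open Relation in
theorem Loc.d1 {T : Type} {Tr : SimpleGraph T} (hT : Tr.IsTree) {h : ℕ}
    {N : List Bool ⊕ List Bool → T} (hN : Loc Tr h N) {x y z : List Bool ⊕ List Bool}
    (hxy : Chd h x y) (hyz : ReflTransGen (Chd h) y z) : TBtw Tr (N x) (N y) (N z) := by
  induction hyz using ReflTransGen.head_induction_on generalizing x with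
  | refl => exact tbtw_right _ _
  | head h1 h2 ih => exact tbtw_trans hT (hN.ch _ _ _ hxy h1) (ih h1) (hN.ne _ _ h1)

open Relation in
theorem Loc.d2 {T : Type} {Tr : SimpleGraph T} (hT : Tr.IsTree) {h : ℕ}
    {N : List Bool ⊕ List Bool → T} (hN : Loc Tr h N) {x y z : List Bool ⊕ List Bool}
    (hxy : ReflTransGen (Chd h) x y) (hyz : ReflTransGen (Chd h) y z) :
    TBtw Tr (N x) (N y) (N z) := by
  induction hxy using ReflTransGen.head_induction_on with
  | refl => exact tbtw_left _ _
  | @head x x' h1 h2 ih =>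
    by_cases e : N x' = N y
    · rw [← e]
      exact hN.d1 hT h1 (h2.trans hyz)
    · exact tbtw_trans' hT (hN.d1 hT h1 h2) ih e

open Relation in
theorem Loc.d3 {T : Type} {Tr : SimpleGraph T} (hT : Tr.IsTree) {h : ℕ}
    {N : List Bool ⊕ List Bool → T} (hN : Loc Tr h N) {m x y u v : List Bool ⊕ List Bool}
    (hx : Chd h m x) (hy : Chd h m y) (hxy : x ≠ y)
    (hxu : ReflTransGen (Chd h) x u) (hyv : ReflTransGen (Chd h) y v) :
    TBtw Tr (N u) (N m) (N v) := by
  have h1 := tbtw_trans hT (hN.sib _ _ _ hx hy hxy) (hN.d1 hT hy hyv) (hN.ne _ _ hy)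
  exact tbtw_trans' hT (hN.d1 hT hx hxu).symm h1 (hN.ne _ _ hx).symm

open Relation in
theorem Loc.d4 {T : Type} {Tr : SimpleGraph T} {h : ℕ} (hT : Tr.IsTree)
    {N : List Bool ⊕ List Bool → T} (hN : Loc Tr h N) {x z : List Bool ⊕ List Bool}
    (hxz : TransGen (Chd h) x z) : N x ≠ N z := by
  obtain ⟨y, hxy, hyz⟩ := TransGen.head'_iff.1 hxz
  exact (hN.d1 hT hxy hyz).ne (hN.ne _ _ hxy)

open Relation in
theorem chd_desc {h : ℕ} {τ σ : List Bool} (h1 : τ <:+ σ) (h2 : σ.length ≤ h) :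
    ReflTransGen (Chd h) (Sum.inl τ) (Sum.inl σ) := by
  obtain ⟨ρ, rfl⟩ := h1
  induction ρ with
  | nil => exact .refl
  | cons b ρ ih =>
    simp at h2
    exact ((ih (by simp; omega)).tail (.mj _ (by simp; omega))).tail (.jm b _ (by simp; omega))

theorem cext_range {T : Type} {h : ℕ} (η : TVert h → T) (x : List Bool ⊕ List Bool) :
    ∃ a, cext η x = η a := by
  rcases x with σ | σ
  · by_cases hσ : σ.length ≤ h
    · exact ⟨_, dif_pos hσ⟩
    · exact ⟨_, dif_neg hσ⟩
  · by_cases hσ : σ.length + 1 ≤ h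
    · exact ⟨_, dif_pos hσ⟩
    · exact ⟨_, dif_neg hσ⟩

/-- The map of `T_n` induced by maps of strings. -/
def subEmb {T : Type} {h : ℕ} (η : TVert h → T) (μ ν : List Bool → List Bool) {n : ℕ} :
    TVert n → T :=
  fun t => Sum.elim (fun l => cext η (Sum.inl (μ l.1))) (fun l => cext η (Sum.inr (ν l.1))) t

/-- Conditions on string maps. -/
structure StrEmb (h n : ℕ) (μ ν : List Bool → List Bool) : Prop where
  len : ∀ σ, σ.length ≤ n → (μ σ).length ≤ h
  up : ∀ σ, σ.length + 1 ≤ n → μ σ <:+ ν σ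
  dn : ∀ σ b, σ.length + 1 ≤ n → (b :: ν σ) <:+ μ (b :: σ)

theorem StrEmb.len' {h n : ℕ} {μ ν : List Bool → List Bool} (H : StrEmb h n μ ν)
    (σ : List Bool) (hσ : σ.length + 1 ≤ n) : (ν σ).length + 1 ≤ h := by
  have h1 := (H.dn σ true hσ).length_le
  have h2 := H.len (true :: σ) (by simpa using hσ)
  simp at h1
  omega

open Relation in
theorem StrEmb.cup {h n : ℕ} {μ ν : List Bool → List Bool} (H : StrEmb h n μ ν)
    (σ : List Bool) (hσ : σ.length + 1 ≤ n) :
    TransGen (Chd h) (Sum.inl (μ σ)) (Sum.inr (ν σ)) := by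
  have h1 := H.len' σ hσ
  exact TransGen.tail' (chd_desc (H.up σ hσ) (by omega)) (.mj _ h1)

open Relation in
theorem StrEmb.cdn' {h n : ℕ} {μ ν : List Bool → List Bool} (H : StrEmb h n μ ν)
    (σ : List Bool) (b : Bool) (hσ : σ.length + 1 ≤ n) :
    ReflTransGen (Chd h) (Sum.inl (b :: ν σ)) (Sum.inl (μ (b :: σ))) :=
  chd_desc (H.dn σ b hσ) (H.len _ (by simpa using hσ))

open Relation in
theorem StrEmb.cdn {h n : ℕ} {μ ν : List Bool → List Bool} (H : StrEmb h n μ ν)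
    (σ : List Bool) (b : Bool) (hσ : σ.length + 1 ≤ n) :
    TransGen (Chd h) (Sum.inr (ν σ)) (Sum.inl (μ (b :: σ))) :=
  TransGen.head' (.jm b _ (H.len' σ hσ)) (H.cdn' σ b hσ)

theorem sub_ne {T : Type} {Tr : SimpleGraph T} (hT : Tr.IsTree) {h n : ℕ} (η : TVert h → T)
    (hη : IsHomeoEmb (Tgraph h) Tr η) {μ ν : List Bool → List Bool} (H : StrEmb h n μ ν) :
    ∀ x y : TVert n, (Tgraph n).Adj x y → subEmb η μ ν x ≠ subEmb η μ ν y := by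
  have hN := loc_ext hT η hη
  have key : ∀ (l : MVert n) (y : TVert n), (Tgraph n).Adj (Sum.inl l) y →
      subEmb η μ ν (Sum.inl l) ≠ subEmb η μ ν y := by
    intro l y hy
    obtain ⟨σ, rfl, h1 | ⟨b, h1⟩⟩ := tgraph_adj_inl l y hy
    · simp only [subEmb, Sum.elim_inl, Sum.elim_inr]
      rw [h1]
      exact hN.d4 hT (H.cup σ.1 σ.2)
    · simp only [subEmb, Sum.elim_inl, Sum.elim_inr]
      rw [h1]
      exact (hN.d4 hT (H.cdn σ.1 b σ.2)).symm
  rintro (l | σ) y hy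
  · exact key l y hy
  · obtain ⟨l, rfl, -⟩ := tgraph_adj_inr σ y hy
    exact (key l _ hy.symm).symm

theorem sub_loc {T : Type} {Tr : SimpleGraph T} (hT : Tr.IsTree) {h n : ℕ} (η : TVert h → T)
    (hη : IsHomeoEmb (Tgraph h) Tr η) {μ ν : List Bool → List Bool} (H : StrEmb h n μ ν) :
    ∀ t t₁ t₂ : TVert n, (Tgraph n).Adj t t₁ → (Tgraph n).Adj t t₂ → t₁ ≠ t₂ →
      TBtw Tr (subEmb η μ ν t₁) (subEmb η μ ν t) (subEmb η μ ν t₂) := by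
  have hN := loc_ext hT η hη
  rintro (l | σ) t₁ t₂ h1 h2 h3
  · obtain ⟨l, gl⟩ := l
    obtain ⟨⟨σ₁, g1⟩, rfl, k1⟩ := tgraph_adj_inl _ t₁ h1
    obtain ⟨⟨σ₂, g2⟩, rfl, k2⟩ := tgraph_adj_inl _ t₂ h2
    clear h1 h2
    simp only at k1 k2
    simp only [subEmb, Sum.elim_inl, Sum.elim_inr]
    rcases k1 with k1 | ⟨b, k1⟩ <;> rcases k2 with k2 | ⟨b', k2⟩
    · subst k1
      subst k2
      exact absurd rfl h3
    · subst k1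
      subst k2
      exact (hN.d2 hT (H.cdn σ₂ b' g2).to_reflTransGen (H.cup _ g1).to_reflTransGen).symm
    · subst k2
      subst k1
      exact (hN.d2 hT (H.cdn σ₁ b g1).to_reflTransGen (H.cup _ g2).to_reflTransGen)
    · subst k1
      obtain ⟨e1, e2⟩ := List.cons.inj k2
      subst e2
      exact absurd rfl h3
  · obtain ⟨σ, hσ⟩ := σ
    obtain ⟨⟨l₁, g1⟩, rfl, k1⟩ := tgraph_adj_inr _ t₁ h1
    obtain ⟨⟨l₂, g2⟩, rfl, k2⟩ := tgraph_adj_inr _ t₂ h2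
    clear h1 h2
    simp only at k1 k2
    simp only [subEmb, Sum.elim_inl, Sum.elim_inr]
    have hl := H.len' σ hσ
    rcases k1 with k1 | ⟨b, k1⟩ <;> rcases k2 with k2 | ⟨b', k2⟩ <;> subst k1 <;> subst k2
    · exact absurd rfl h3
    · exact hN.d2 hT (H.cup _ hσ).to_reflTransGen (H.cdn _ b' hσ).to_reflTransGen
    · exact (hN.d2 hT (H.cup _ hσ).to_reflTransGen (H.cdn _ b hσ).to_reflTransGen).symm
    · exact hN.d3 hT (.jm b _ hl) (.jm b' _ hl) (by intro e; simp at e; subst e; exact h3 rfl)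
        (H.cdn' _ b hσ) (H.cdn' _ b' hσ)

theorem sub_cascade {V T : Type} {Tr : SimpleGraph T} (hT : Tr.IsTree) {X : T → Finset V}
    {h n s : ℕ} (η : TVert h → T)
    (hη : IsCascade Tr X h s η) {μ ν : List Bool → List Bool} (H : StrEmb h n μ ν) :
    IsCascade Tr X n s (subEmb η μ ν) := by
  have hne := sub_ne hT η hη.1 H
  have hloc := sub_loc hT η hη.1 H
  refine ⟨⟨inj_of_loc hT (tgraph_connected n) _ hne hloc, ?_⟩, ?_, ?_⟩
  · intro t t₁ t₂ h1 h2 h3 p q hp hq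
    exact (tbtw_iff hT p q hp hq).2 (hloc t t₁ t₂ h1 h2 h3)
  · intro l
    have : subEmb η μ ν (Sum.inl l) = η (Sum.inl ⟨μ l.1, H.len _ l.2⟩) := dif_pos (H.len _ l.2)
    rw [this]
    exact hη.2.1 _
  · rintro t ⟨a₁, a₂, p, hp, ht⟩
    have hr : ∀ a : TVert n, ∃ c, subEmb η μ ν a = η c := by
      rintro (l | l)
      · exact cext_range η (Sum.inl (μ l.1))
      · exact cext_range η (Sum.inr (ν l.1))
    obtain ⟨c₁, e₁⟩ := hr a₁
    obtain ⟨c₂, e₂⟩ := hr a₂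
    exact hη.2.2 t ⟨c₁, c₂, p.copy e₁ e₂, by simpa using hp, by simpa using ht⟩

/-- Auxiliary recursion. -/
def bmu (g : ℕ → List Bool → Bool → List Bool) (n : ℕ) (τ : List Bool) : List Bool → List Bool
  | [] => τ
  | b :: σ => g (n - (σ.length + 1)) (bmu g n τ σ) b

theorem builder (Q : ℕ → List Bool → Prop) (R : List Bool → List Bool → (Bool → List Bool) → Prop)
    (step : ∀ n τ, Q (n + 1) τ → ∃ ν, ∃ m : Bool → List Bool, R τ ν m ∧ ∀ b, Q n (m b))
    (n : ℕ) (τ : List Bool) (h0 : Q n τ) :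
    ∃ μ ν : List Bool → List Bool, (∀ σ, σ.length ≤ n → Q (n - σ.length) (μ σ)) ∧
      ∀ σ, σ.length + 1 ≤ n → R (μ σ) (ν σ) (fun b => μ (b :: σ)) := by
  have step' : ∀ n τ, ∃ ν, ∃ m : Bool → List Bool, Q (n + 1) τ → R τ ν m ∧ ∀ b, Q n (m b) := by
    intro n τ
    by_cases hq : Q (n + 1) τ
    · obtain ⟨ν, m, h⟩ := step n τ hq
      exact ⟨ν, m, fun _ => h⟩
    · exact ⟨[], fun _ => [], fun h => absurd h hq⟩
  choose f g hfg using step'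
  have hQ : ∀ σ : List Bool, σ.length ≤ n → Q (n - σ.length) (bmu g n τ σ) := by
    intro σ
    induction σ with
    | nil => intro _; simpa [bmu] using h0
    | cons b σ ih =>
      intro hσ
      simp only [List.length_cons] at hσ
      have h1 := ih (by omega)
      have e : n - σ.length = n - (σ.length + 1) + 1 := by omega
      rw [e] at h1
      exact (hfg _ _ h1).2 b
  refine ⟨bmu g n τ, fun σ => f (n - (σ.length + 1)) (bmu g n τ σ), hQ, ?_⟩
  intro σ hσ
  have h1 := hQ σ (by omega)
  have e : n - σ.length = n - (σ.length + 1) + 1 := by omega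
  rw [e] at h1
  exact (hfg _ _ h1).1

/-- The tree below `τ` contains an embedded binary tree of height `n` with leaves in `P`. -/
def HasT (P : List Bool → Prop) : ℕ → List Bool → Prop
  | 0, τ => ∃ σ, τ <:+ σ ∧ P σ
  | n + 1, τ => ∃ ν, τ <:+ ν ∧ ∀ b, HasT P n (b :: ν)

theorem HasT.mono {P : List Bool → Prop} {n : ℕ} {τ τ' : List Bool} (h : τ <:+ τ')
    (hp : HasT P n τ') : HasT P n τ := by
  cases n with
  | zero => obtain ⟨σ, h1, h2⟩ := hp; exact ⟨σ, h.trans h1, h2⟩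
  | succ n => obtain ⟨σ, h1, h2⟩ := hp; exact ⟨σ, h.trans h1, h2⟩

theorem HasT.leaf {P : List Bool → Prop} {n : ℕ} {τ : List Bool}
    (hp : HasT P n τ) : ∃ σ, τ <:+ σ ∧ P σ := by
  induction n generalizing τ with
  | zero => exact hp
  | succ n ih =>
    obtain ⟨σ, h1, h2⟩ := hp
    obtain ⟨ρ, h3, h4⟩ := ih (h2 true)
    exact ⟨ρ, (h1.trans (List.suffix_cons _ _)).trans h3, h4⟩

theorem ramsey {V : Type} [DecidableEq V] (C : Finset V) (P : V → List Bool → Prop) (d : ℕ) :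
    ∀ (f : V → ℕ) (τ : List Bool), ∑ v ∈ C, f v ≤ d →
      (∀ σ, τ <:+ σ → σ.length = τ.length + d → ∃ v ∈ C, P v σ) →
      ∃ v ∈ C, HasT (P v) (f v) τ := by
  induction d with
  | zero =>
    intro f τ hf hc
    obtain ⟨v, hv, hp⟩ := hc τ List.suffix_rfl rfl
    have : f v = 0 := by
      have := Finset.single_le_sum (f := f) (fun _ _ => Nat.zero_le _) hv
      omega
    exact ⟨v, hv, by rw [this]; exact ⟨τ, List.suffix_rfl, hp⟩⟩
  | succ d ih =>
    intro f τ hf hc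
    have hc' : ∀ b, ∀ σ, (b :: τ) <:+ σ → σ.length = (b :: τ).length + d → ∃ v ∈ C, P v σ := by
      intro b σ h1 h2
      refine hc σ ((List.suffix_cons _ _).trans h1) ?_
      simp at h2
      omega
    by_cases hf' : ∑ v ∈ C, f v ≤ d
    · obtain ⟨v, hv, h⟩ := ih f (true :: τ) hf' (hc' true)
      exact ⟨v, hv, h.mono (List.suffix_cons _ _)⟩
    by_cases hx : ∃ b, ∃ v ∈ C, 1 ≤ f v ∧ ¬ HasT (P v) (f v - 1) (b :: τ)
    · obtain ⟨b, v, hv, h1, h2⟩ := hx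
      have hs : ∑ u ∈ C, Function.update f v (f v - 1) u ≤ d := by
        rw [Finset.sum_update_of_mem hv]
        have := Finset.add_sum_erase C f hv
        rw [Finset.sdiff_singleton_eq_erase]
        omega
      obtain ⟨u, hu, h⟩ := ih _ (b :: τ) hs (hc' b)
      by_cases e : u = v
      · subst e
        rw [Function.update_self] at h
        exact absurd h h2
      · rw [Function.update_of_ne e] at h
        exact ⟨u, hu, h.mono (List.suffix_cons _ _)⟩
    · push Not at hx
      have : ∃ v ∈ C, f v ≠ 0 := by
        by_contra hh
        push Not at hh
        rw [Finset.sum_eq_zero hh] at hf'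
        omega
      obtain ⟨v, hv, hfv⟩ := this
      refine ⟨v, hv, ?_⟩
      obtain ⟨m, hm⟩ := Nat.exists_eq_succ_of_ne_zero hfv
      rw [hm]
      refine ⟨τ, List.suffix_rfl, fun b => ?_⟩
      have := hx b v hv (by omega)
      rwa [hm] at this

theorem find_big {V T : Type} [Fintype V] {Tr : SimpleGraph T} (hT : Tr.IsTree) {X : T → Finset V}
    (hX : ∀ x y z : T, TBtw Tr x y z → ∀ v, v ∈ X x → v ∈ X z → v ∈ X y)
    {h a s : ℕ} (η : TVert h → T) (hη : IsCascade Tr X h s η) (F : Finset V)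
    (hF : ∀ t, F ⊆ X (η t)) (v : V) (hv : v ∉ F) (τ : List Bool)
    (h1 : HasT (fun σ => σ.length ≤ h ∧ v ∈ X (cext η (Sum.inl σ))) a τ)
    (h2 : v ∈ X (cext η (Sum.inl τ))) :
    ∃ η' : TVert a → T, IsCascade Tr X a s η' ∧
      F.card + 1 ≤ (⋂ t : TVert a, ((X (η' t) : Set V))).ncard := by
  classical
  have hN := loc_ext hT η hη.1
  set P : List Bool → Prop := fun σ => σ.length ≤ h ∧ v ∈ X (cext η (Sum.inl σ)) with hP
  obtain ⟨μ, ν, hq, hr⟩ := builder (fun n τ => HasT P n τ ∧ v ∈ X (cext η (Sum.inl τ)))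
    (fun τ ν m => τ <:+ ν ∧ (∀ b, m b = b :: ν) ∧ v ∈ X (cext η (Sum.inr ν))) (by
      rintro n τ ⟨⟨ν, h3, h4⟩, h5⟩
      obtain ⟨σ0, g0, l0, v0⟩ := (h4 false).leaf
      obtain ⟨σ1, g1, l1, v1⟩ := (h4 true).leaf
      have hl : ν.length + 1 ≤ h := by
        have := g0.length_le
        simp at this
        omega
      have hJ : v ∈ X (cext η (Sum.inr ν)) :=
        hX _ _ _ (hN.d3 hT (.jm false ν hl) (.jm true ν hl) (by simp)
          (chd_desc g0 l0) (chd_desc g1 l1)) v v0 v1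
      refine ⟨ν, fun b => b :: ν, ⟨h3, fun _ => rfl, hJ⟩, fun b => ⟨h4 b, ?_⟩⟩
      obtain ⟨σ, g, l, vv⟩ := (h4 b).leaf
      exact hX _ _ _ (hN.d1 hT (.jm b ν hl) (chd_desc g l)) v hJ vv) a τ ⟨h1, h2⟩
  have H : StrEmb h a μ ν := by
    refine ⟨?_, ?_, ?_⟩
    · intro σ hσ
      obtain ⟨ρ, g, l, -⟩ := (hq σ hσ).1.leaf
      exact g.length_le.trans l
    · intro σ hσ
      exact (hr σ hσ).1
    · intro σ b hσ
      have := (hr σ hσ).2.1 b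
      simp only at this
      rw [this]
  refine ⟨subEmb η μ ν, sub_cascade hT η hη H, ?_⟩
  have : ((insert v F : Finset V) : Set V) ⊆ ⋂ t : TVert a, ((X (subEmb η μ ν t) : Set V)) := by
    intro u hu
    rw [Set.mem_iInter]
    intro t
    rw [Finset.mem_coe] at hu ⊢
    rw [Finset.mem_insert] at hu
    rcases hu with rfl | hu
    · rcases t with ⟨l, hl⟩ | ⟨l, hl⟩
      · exact (hq l hl).2
      · exact (hr l hl).2.2
    · rcases t with ⟨l, hl⟩ | ⟨l, hl⟩
      · obtain ⟨c, e⟩ := cext_range η (Sum.inl (μ l))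
        have := hF c hu
        rw [← e] at this
        exact this
      · obtain ⟨c, e⟩ := cext_range η (Sum.inr (ν l))
        have := hF c hu
        rw [← e] at this
        exact this
  have h3 := Set.ncard_le_ncard this (Set.toFinite _)
  rw [Set.ncard_coe_finset, Finset.card_insert_of_notMem hv] at h3
  exact h3

/-- Lemma 4.5. Let `(T, X)` be a tree-decomposition of width `< w` of
`G`, and `h = (2(a+2)w + 2)b`. If there is a cascade `η` of height `h` and size `s + k`
whose bags at images of `T_h` have at least `k` common elements, then either there is a
cascade of height `a` and size `s + k` whose bags have at least `k + 1` common elements, or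
there is an injective cascade of height `b`, size `s + k`, and common intersection set of
size `k`. -/
theorem injective_cascade_or_bigger_intersection (a b s w k : ℕ)
    (ha : 0 < a) (hb : 0 < b) (hs : 0 < s) (hw : 0 < w)
    {V T : Type} [Fintype V] [Fintype T] (G : SimpleGraph V)
    (Tr : SimpleGraph T) (X : T → Finset V) (hTD : IsTreeDecomp G Tr X)
    (hwidth : ∀ t, (X t).card ≤ w)
    (h : ℕ) (hh : h = (2 * (a + 2) * w + 2) * b)
    (η : TVert h → T) (hη : IsCascade Tr X h (s + k) η)
    (hint : k ≤ (⋂ t : TVert h, ((X (η t) : Set V))).ncard) :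
    (∃ η' : TVert a → T, IsCascade Tr X a (s + k) η' ∧
      k + 1 ≤ (⋂ t : TVert a, ((X (η' t) : Set V))).ncard) ∨
    (∃ (η' : TVert b → T) (I : Finset V),
      IsInjectiveCascade Tr X b (s + k) η' I ∧ I.card = k) := by
  classical
  obtain ⟨hT, -, -, hW⟩ := hTD
  have hX : ∀ x y z : T, TBtw Tr x y z → ∀ v, v ∈ X x → v ∈ X z → v ∈ X y := by
    intro x y z hb v hx hz
    obtain ⟨p, hp, -⟩ := hT.existsUnique_path x z
    exact hW x y z p hp (hb p hp) v hx hz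
  have hN := loc_ext hT η hη.1
  obtain ⟨F, hFs, hFc⟩ : ∃ F : Finset V, (F : Set V) ⊆ (⋂ t : TVert h, ((X (η t) : Set V))) ∧
      F.card = k := by
    rw [Set.ncard_eq_toFinset_card'] at hint
    obtain ⟨F, h1, h2⟩ := Finset.exists_subset_card_eq hint
    exact ⟨F, fun x hx => Set.mem_toFinset.1 (h1 hx), h2⟩
  have hF : ∀ t, F ⊆ X (η t) := fun t v hv => Set.mem_iInter.1 (hFs hv) t
  by_cases hbig : ∃ η' : TVert a → T, IsCascade Tr X a (s + k) η' ∧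
      k + 1 ≤ (⋂ t : TVert a, ((X (η' t) : Set V))).ncard
  · exact Or.inl hbig
  right
  have hno : ∀ v, v ∉ F → ∀ τ, v ∈ X (cext η (Sum.inl τ)) →
      ¬ HasT (fun σ => σ.length ≤ h ∧ v ∈ X (cext η (Sum.inl σ))) a τ := by
    intro v hv τ h1 h2
    apply hbig
    rw [← hFc] at hη ⊢
    exact find_big hT hX η hη F hF v hv τ h2 h1
  have hsum : ∀ x, ∑ v ∈ X x \ F, a ≤ a * w := by
    intro x
    rw [Finset.sum_const, smul_eq_mul, mul_comm]
    exact Nat.mul_le_mul_left _ ((Finset.card_le_card Finset.sdiff_subset).trans (hwidth x))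
  have hdown1 : ∀ τ : List Bool, τ.length + a * w + 1 ≤ h → ∃ ν, τ <:+ ν ∧
      ν.length = τ.length + a * w ∧
      ∀ v, v ∈ X (cext η (Sum.inl τ)) → v ∈ X (cext η (Sum.inr ν)) → v ∈ F := by
    intro τ hτ
    by_contra hc
    push Not at hc
    obtain ⟨v, hv, hh⟩ := ramsey (X (cext η (Sum.inl τ)) \ F)
      (fun v σ => σ.length ≤ h ∧ v ∈ X (cext η (Sum.inl σ))) (a * w) (fun _ => a) τ (hsum _) (by
        intro σ h1 h2
        obtain ⟨v, g1, g2, g3⟩ := hc σ h1 h2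
        refine ⟨v, Finset.mem_sdiff.2 ⟨g1, g3⟩, by omega, ?_⟩
        exact hX _ _ _ (hN.d2 hT (chd_desc h1 (by omega))
          (Relation.ReflTransGen.single (.mj σ (by omega)))) v g1 g2)
    rw [Finset.mem_sdiff] at hv
    exact hno v hv.2 τ hv.1 hh
  have hdown2 : ∀ (ν : List Bool) (b : Bool), ν.length + 1 + a * w ≤ h → ∃ μ, (b :: ν) <:+ μ ∧
      μ.length = ν.length + 1 + a * w ∧
      ∀ v, v ∈ X (cext η (Sum.inr ν)) → v ∈ X (cext η (Sum.inl μ)) → v ∈ F := by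
    intro ν b hν
    by_contra hc
    push Not at hc
    obtain ⟨v, hv, hh⟩ := ramsey (X (cext η (Sum.inr ν)) \ F)
      (fun v σ => σ.length ≤ h ∧ v ∈ X (cext η (Sum.inl σ))) (a * w) (fun _ => a) (b :: ν)
      (hsum _) (by
        intro σ h1 h2
        simp only [List.length_cons] at h2
        obtain ⟨v, g1, g2, g3⟩ := hc σ h1 h2
        exact ⟨v, Finset.mem_sdiff.2 ⟨g1, g3⟩, by omega, g2⟩)
    rw [Finset.mem_sdiff] at hv
    obtain ⟨σ, g, l, vv⟩ := hh.leaf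
    refine hno v hv.2 (b :: ν) ?_ hh
    exact hX _ _ _ (hN.d1 hT (.jm b ν (by omega)) (chd_desc g l)) v hv.1 vv
  have hD : 2 * (a * w) + 1 ≤ 2 * (a + 2) * w + 2 := by nlinarith
  obtain ⟨μ, ν, hq, hr⟩ := builder
    (fun n τ => τ.length + (2 * (a + 2) * w + 2) * n ≤ h)
    (fun τ ν m => (τ <:+ ν ∧ ∀ b, (b :: ν) <:+ m b) ∧
      (∀ v, v ∈ X (cext η (Sum.inl τ)) → v ∈ X (cext η (Sum.inr ν)) → v ∈ F) ∧
      ∀ b, ∀ v, v ∈ X (cext η (Sum.inr ν)) → v ∈ X (cext η (Sum.inl (m b))) → v ∈ F) (by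
      intro n τ hτ
      rw [Nat.mul_succ] at hτ
      generalize (2 * (a + 2) * w + 2) * n = E at *
      obtain ⟨ν, n1, n2, n3⟩ := hdown1 τ (by omega)
      choose m m1 m2 m3 using fun b => hdown2 ν b (by omega)
      refine ⟨ν, m, ⟨⟨n1, m1⟩, n3, m3⟩, fun b => ?_⟩
      rw [m2]
      omega) b [] (by simp [hh])
  have H : StrEmb h b μ ν := by
    refine ⟨?_, ?_, ?_⟩
    · intro σ hσ
      exact (Nat.le_add_right _ _).trans (hq σ hσ)
    · intro σ hσ
      exact (hr σ hσ).1.1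
    · intro σ b hσ
      exact (hr σ hσ).1.2 b
  have hsub : ∀ t : TVert b, F ⊆ X (subEmb η μ ν t) := by
    intro t
    have : ∃ c, subEmb η μ ν t = η c := by
      rcases t with l | l
      · exact cext_range η (Sum.inl (μ l.1))
      · exact cext_range η (Sum.inr (ν l.1))
    obtain ⟨c, e⟩ := this
    rw [e]
    exact hF c
  have hadj0 : ∀ (l : MVert b) (t : TVert b), (Tgraph b).Adj (Sum.inl l) t →
      ∀ v, v ∈ X (subEmb η μ ν (Sum.inl l)) → v ∈ X (subEmb η μ ν t) → v ∈ F := by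
    intro l t hlt
    obtain ⟨σ, rfl, h1 | ⟨c, h1⟩⟩ := tgraph_adj_inl l t hlt
    · simp only [subEmb, Sum.elim_inl, Sum.elim_inr]
      rw [h1]
      exact (hr σ.1 σ.2).2.1
    · simp only [subEmb, Sum.elim_inl, Sum.elim_inr]
      rw [h1]
      exact fun v v1 v2 => (hr σ.1 σ.2).2.2 c v v2 v1
  have hadj : ∀ t t' : TVert b, (Tgraph b).Adj t t' →
      ∀ v, v ∈ X (subEmb η μ ν t) → v ∈ X (subEmb η μ ν t') → v ∈ F := by
    rintro (l | l) t' ht v v1 v2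
    · exact hadj0 l t' ht v v1 v2
    · obtain ⟨m, rfl, -⟩ := tgraph_adj_inr l t' ht
      exact hadj0 m _ ht.symm v v2 v1
  refine ⟨subEmb η μ ν, F, ⟨sub_cascade hT η hη H, by omega, ?_⟩, hFc⟩
  intro t t' htt
  ext v
  simp only [Set.mem_inter_iff, Finset.mem_coe]
  constructor
  · rintro ⟨v1, v2⟩
    obtain ⟨u, hu, hb'⟩ := path_lemma2 hT (tgraph_connected b) _ (sub_ne hT η hη.1 H)
      (sub_loc hT η hη.1 H) htt
    exact hadj t u hu v v1 (hX _ _ _ hb' v v1 v2)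
  · exact fun hv => ⟨hsub t hv, hsub t' hv⟩
end

section
/- For every two integers a ≥ 1 and k ≥ 1 there exists an integer h = h(a,k) such that the following holds: for every coloring of the major vertices of T_h using k colors, there exists a monotone homeomorphic embedding η: T_a ↪ T_h such that all major vertices of T_a map to major vertices of T_h of the same color. -/
/-!
Common definitions: minors, widths, connectivity, the specific graphs
`K4`, `K23`, `C32`, `graphA`, the binary trees `CT_h`, the graphs `𝒫_k`, `𝒬_k`,
the trees `T_h`, homeomorphic embeddings, cascades, and related notions,
following Dang--Thomas, "Minors of two-connected graphs of large path-width".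
-/

open SimpleGraph

namespace MonoEmb

/-- Monochromatic tree of height `n` below `τ`. -/
def M (h : ℕ) {k : ℕ} (c : List Bool → Fin k) (i : Fin k) : ℕ → List Bool → Prop
  | 0, _ => True
  | n + 1, τ => ∃ τ', τ <:+ τ' ∧ τ'.length < h ∧ c τ' = i ∧ ∀ b : Bool, M h c i n (b :: τ')

lemma M_mono {h k : ℕ} {c : List Bool → Fin k} {i : Fin k} {n : ℕ} {τ ρ : List Bool}
    (hs : τ <:+ ρ) (hM : M h c i n ρ) : M h c i n τ := by
  cases n with
  | zero => trivial
  | succ n =>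
    obtain ⟨τ', h1, h2⟩ := hM
    exact ⟨τ', hs.trans h1, h2⟩

lemma ramsey (h k : ℕ) (hk : 1 ≤ k) (c : List Bool → Fin k) :
    ∀ (N : ℕ) (a : Fin k → ℕ) (τ : List Bool), ∑ i, a i = N → τ.length + N ≤ h →
      ∃ i, M h c i (a i) τ := by
  intro N
  induction N with
  | zero =>
    intro a τ hs _
    refine ⟨⟨0, hk⟩, ?_⟩
    have : a ⟨0, hk⟩ = 0 := by
      have := Finset.sum_eq_zero_iff.1 hs ⟨0, hk⟩ (Finset.mem_univ _)
      exact this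
    rw [this]; trivial
  | succ N ih =>
    intro a τ hs hl
    rcases Nat.eq_zero_or_pos (a (c τ)) with h0 | hpos
    · exact ⟨c τ, by rw [h0]; trivial⟩
    obtain ⟨m, hm⟩ : ∃ m, a (c τ) = m + 1 := ⟨a (c τ) - 1, by omega⟩
    have hsum : ∑ i, Function.update a (c τ) m i = N := by
      rw [Finset.sum_update_of_mem (Finset.mem_univ _)]
      rw [← Finset.add_sum_erase _ _ (Finset.mem_univ (c τ)), hm] at hs
      rw [← Finset.erase_eq]
      omega
    have key : ∀ b : Bool, ∃ i, M h c i (Function.update a (c τ) m i) (b :: τ) :=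
      fun b => ih _ _ hsum (by simp; omega)
    by_cases hall : ∀ b : Bool, M h c (c τ) m (b :: τ)
    · refine ⟨c τ, ?_⟩
      rw [hm]
      exact ⟨τ, List.suffix_rfl, by omega, rfl, hall⟩
    · push Not at hall
      obtain ⟨b, hb⟩ := hall
      obtain ⟨i, hi⟩ := key b
      by_cases hic : i = c τ
      · subst hic
        simp at hi
        exact absurd hi hb
      · rw [Function.update_of_ne hic] at hi
        exact ⟨i, M_mono (List.suffix_cons b τ) hi⟩

lemma exists_F {h k : ℕ} {c : List Bool → Fin k} {i : Fin k} {a : ℕ} (hM : M h c i a []) :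
    ∃ F : List Bool → List Bool, (∀ σ, σ.length < a → (F σ).length < h ∧ c (F σ) = i) ∧
      ∀ (b : Bool) σ, σ.length + 1 < a → (b :: F σ) <:+ F (b :: σ) := by
  have hg : ∀ (n : ℕ) (τ : List Bool), ∃ τ', M h c i (n+1) τ →
      τ <:+ τ' ∧ τ'.length < h ∧ c τ' = i ∧ ∀ b : Bool, M h c i n (b :: τ') := by
    intro n τ
    by_cases hM : M h c i (n+1) τ
    · obtain ⟨τ', h1⟩ := hM
      exact ⟨τ', fun _ => h1⟩
    · exact ⟨[], fun h => absurd h hM⟩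
  choose g hg using hg
  let F : List Bool → List Bool := fun σ =>
    List.rec (g (a - 1) []) (fun b σ r => g (a - 1 - (σ.length + 1)) (b :: r)) σ
  have F0 : F [] = g (a - 1) [] := rfl
  have F1 : ∀ b σ, F (b :: σ) = g (a - 1 - (σ.length + 1)) (b :: F σ) := fun _ _ => rfl
  have main : ∀ σ : List Bool, σ.length < a → ((F σ).length < h ∧ c (F σ) = i) ∧
      ∀ b : Bool, M h c i (a - 1 - σ.length) (b :: F σ) := by
    intro σ
    induction σ with
    | nil =>
      intro h0
      have h0 : 0 < a := h0
      have := hg (a - 1) [] (by rwa [Nat.sub_add_cancel h0])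
      rw [F0]
      exact ⟨⟨this.2.1, this.2.2.1⟩, this.2.2.2⟩
    | cons b σ ih =>
      intro hl
      simp only [List.length_cons] at hl ⊢
      have h2 := (ih (by omega)).2 b
      have := hg (a - 1 - (σ.length + 1)) (b :: F σ) (by
        rwa [show a - 1 - (σ.length + 1) + 1 = a - 1 - σ.length by omega])
      rw [F1]
      exact ⟨⟨this.2.1, this.2.2.1⟩, this.2.2.2⟩
  refine ⟨F, fun σ hσ => (main σ hσ).1, fun b σ hσ => ?_⟩
  have h2 := (main σ (by omega)).2 b
  rw [F1]
  exact (hg (a - 1 - (σ.length + 1)) (b :: F σ) (by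
        rwa [show a - 1 - (σ.length + 1) + 1 = a - 1 - σ.length by omega])).1

lemma F_suffix {F : List Bool → List Bool} {a : ℕ}
    (hF : ∀ (b : Bool) σ, σ.length + 1 < a → (b :: F σ) <:+ F (b :: σ)) (b : Bool) :
    ∀ σ : List Bool, σ.length + 1 < a → (b :: F []) <:+ F (σ ++ [b]) := by
  intro σ
  induction σ with
  | nil => intro h; exact hF b [] h
  | cons d σ ih =>
    intro h
    simp only [List.length_cons] at h
    exact (ih (by omega)).trans ((List.suffix_cons d _).trans (hF d (σ ++ [b]) (by simp; omega)))

lemma F_inj : ∀ (n : ℕ) {F : List Bool → List Bool} {a : ℕ}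
    (_ : ∀ (b : Bool) σ, σ.length + 1 < a → (b :: F σ) <:+ F (b :: σ))
    (σ σ' : List Bool), σ.length = n → σ.length < a → σ'.length < a → F σ = F σ' → σ = σ' := by
  intro n
  induction n with
  | zero =>
    intro F a hF σ σ' hn h1 h2 he
    obtain rfl := List.length_eq_zero_iff.1 hn
    rcases List.eq_nil_or_concat σ' with rfl | ⟨μ, b, rfl⟩
    · rfl
    · simp at h2
      have := (F_suffix hF b μ h2).length_le
      rw [List.concat_eq_append] at he
      rw [← he] at this
      simp at this
  | succ n ih =>
    intro F a hF σ σ' hn h1 h2 he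
    rcases List.eq_nil_or_concat σ with rfl | ⟨μ, b, rfl⟩
    · simp at hn
    rw [List.concat_eq_append] at *
    simp at hn h1
    have hs := F_suffix hF b μ h1
    rcases List.eq_nil_or_concat σ' with rfl | ⟨μ', b', rfl⟩
    · rw [he] at hs
      have := hs.length_le
      simp at this
    rw [List.concat_eq_append] at *
    simp at h2
    have hs' := F_suffix hF b' μ' h2
    rw [← he] at hs'
    have hb : b :: F [] = b' :: F [] :=
      (List.suffix_of_suffix_length_le hs hs' (by simp)).eq_of_length (by simp)
    obtain rfl : b = b' := by simpa using hb
    rw [ih (F := fun σ => F (σ ++ [b])) (a := a - 1)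
      (fun d σ h => hF d (σ ++ [b]) (by simp; omega)) μ μ' hn (by omega) (by omega) he]

section walks
variable {V : Type*} {G : SimpleGraph V} {S : Set V} {e : Sym2 V}

lemma same_side (hS : ∀ x y, x ∈ S → y ∉ S → G.Adj x y → s(x, y) = e) {x y : V}
    (p : G.Walk x y) : e ∉ p.edges → (x ∈ S ↔ y ∈ S) := by
  induction p with
  | nil => simp
  | @cons x w y hxw p ih =>
    intro h
    simp only [SimpleGraph.Walk.edges_cons, List.mem_cons, not_or] at h
    rw [← ih h.2]
    constructor
    · intro hx; by_contra hw
      exact h.1 (hS _ _ hx hw hxw).symm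
    · intro hw; by_contra hx
      exact h.1 ((hS _ _ hw hx hxw.symm).symm.trans Sym2.eq_swap)

lemma not_mem_edges (hS : ∀ x y, x ∈ S → y ∉ S → G.Adj x y → s(x, y) = e)
    (he : ∀ x y, s(x, y) = e → (x ∈ S ↔ y ∉ S)) {x y : V}
    (p : G.Walk x y) : p.IsTrail → (x ∈ S ↔ y ∈ S) → e ∉ p.edges := by
  induction p with
  | nil => simp
  | @cons x w y hxw p ih =>
    intro ht hxy h
    rw [SimpleGraph.Walk.isTrail_cons] at ht
    simp only [SimpleGraph.Walk.edges_cons, List.mem_cons] at h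
    by_cases hh : e = s(x, w)
    · have h1 := he x w hh.symm
      have h2 := same_side hS p (by rw [hh]; exact ht.2)
      tauto
    · refine ih ht.1 ?_ (h.resolve_left hh)
      rw [← hxy]
      constructor
      · intro hw; by_contra hx
        exact hh ((hS _ _ hw hx hxw.symm).symm.trans Sym2.eq_swap)
      · intro hx; by_contra hw
        exact hh (hS _ _ hx hw hxw).symm

lemma single_edge (hS : ∀ x y, x ∈ S → y ∉ S → G.Adj x y → s(x, y) = e) {t t₁ : V}
    (het : e = s(t, t₁)) (h1 : t ∈ S ↔ t₁ ∉ S) (p : G.Walk t t₁) (hp : p.IsPath) :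
    ∀ e' ∈ p.edges, e' = e := by
  have hmem : e ∈ p.edges := by
    by_contra hc
    have := same_side hS p hc
    tauto
  cases p with
  | nil => simp
  | @cons _ w _ htw p =>
    rw [SimpleGraph.Walk.cons_isPath_iff] at hp
    simp only [SimpleGraph.Walk.edges_cons, List.mem_cons] at hmem
    rcases hmem with h | h
    · rw [het] at h
      obtain rfl : t₁ = w := by
        rcases Sym2.eq_iff.1 h with ⟨-, h⟩ | ⟨h, h'⟩
        · exact h
        · exact h'.trans h
      have := SimpleGraph.Walk.isPath_iff_eq_nil.1 hp.1
      subst this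
      intro e' he'
      simpa [het] using he'
    · rw [het] at h
      exact absurd (SimpleGraph.Walk.fst_mem_support_of_mem_edges p h) hp.2

lemma core (t t₁ t₂ : V) (S : Set V)
    (hS : ∀ x y, x ∈ S → y ∉ S → G.Adj x y → s(x, y) = s(t, t₁))
    (h1 : t ∈ S ↔ t₁ ∉ S) (h2 : t ∈ S ↔ t₂ ∈ S)
    (p₁ : G.Walk t t₁) (p₂ : G.Walk t t₂) (hp₁ : p₁.IsPath) (hp₂ : p₂.IsPath) :
    ∀ e ∈ p₁.edges, e ∉ p₂.edges := by
  intro e' he'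
  rw [single_edge hS rfl h1 p₁ hp₁ e' he']
  refine not_mem_edges hS ?_ p₂ hp₂.isTrail h2
  intro x y hxy
  rcases Sym2.eq_iff.1 hxy with ⟨rfl, rfl⟩ | ⟨rfl, rfl⟩ <;> tauto
end walks

lemma adj_rl {h : ℕ} (t : JVert h) (m : MVert h) :
    (Tgraph h).Adj (Sum.inr t) (Sum.inl m) ↔ m.1 = t.1 ∨ ∃ b, m.1 = b :: t.1 := by
  obtain ⟨t, ht⟩ := t
  obtain ⟨m, hm⟩ := m
  simp only [Tgraph, SimpleGraph.fromEdgeSet_adj, Set.mem_setOf_eq]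
  constructor
  · rintro ⟨⟨σ, hσ, h | ⟨b, h⟩⟩, -⟩
    · simp at h; left; simp [h]
    · simp at h; right; exact ⟨b, by simp [h]⟩
  · rintro (h | ⟨b, h⟩)
    · subst h
      exact ⟨⟨m, ht, Or.inl rfl⟩, by simp⟩
    · subst h
      exact ⟨⟨t, ht, Or.inr ⟨b, rfl⟩⟩, by simp⟩

lemma adj_ll {h : ℕ} (t m : MVert h) : ¬ (Tgraph h).Adj (Sum.inl t) (Sum.inl m) := by
  simp [Tgraph]

lemma adj_rr {h : ℕ} (t m : JVert h) : ¬ (Tgraph h).Adj (Sum.inr t) (Sum.inr m) := by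
  simp [Tgraph]

/-- The string labelling a vertex. -/
def val {h : ℕ} (x : TVert h) : List Bool := x.elim (·.1) (·.1)

/-- The part of the tree below the minor vertex `τ`. -/
def D (h : ℕ) (τ : List Bool) : Set (TVert h) := {x | τ <:+ val x}

lemma cross {h : ℕ} (b : Bool) (τ : List Bool) (hτ : τ.length + 1 ≤ h)
    (x y : TVert h) (hx : x ∈ D h (b :: τ)) (hy : y ∉ D h (b :: τ)) (hxy : (Tgraph h).Adj x y) :
    x = Sum.inl ⟨b :: τ, by simpa using hτ⟩ ∧ y = Sum.inr ⟨τ, hτ⟩ := by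
  rcases x with m | t <;> rcases y with m' | t'
  · exact absurd hxy (adj_ll _ _)
  · obtain ⟨m, hm⟩ := m
    obtain ⟨t, ht⟩ := t'
    simp only [D, val, Set.mem_setOf_eq, Sum.elim_inl, Sum.elim_inr] at hx hy
    rcases (adj_rl _ _).1 hxy.symm with h | ⟨d, h⟩ <;> simp only at h <;> subst h
    · exact absurd hx hy
    · rcases List.suffix_cons_iff.1 hx with h | h
      · simp at h
        obtain ⟨rfl, rfl⟩ := h
        exact ⟨rfl, rfl⟩
      · exact absurd h hy
  · simp only [D, val, Set.mem_setOf_eq, Sum.elim_inl, Sum.elim_inr] at hx hy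
    rcases (adj_rl _ _).1 hxy with h | ⟨d, h⟩ <;> rw [h] at hy
    · exact absurd hx hy
    · exact absurd (hx.trans (List.suffix_cons d _)) hy
  · exact absurd hxy (adj_rr _ _)

/-- Image of minor vertices. -/
def Gm (F : List Bool → List Bool) : List Bool → List Bool
  | [] => []
  | b :: σ => b :: F σ

lemma Gm_suffix {F : List Bool → List Bool} {a : ℕ}
    (hF : ∀ (b : Bool) σ, σ.length + 1 < a → (b :: F σ) <:+ F (b :: σ)) (σ : List Bool)
    (hσ : σ.length < a) : Gm F σ <:+ F σ := by
  cases σ with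
  | nil => exact List.nil_suffix
  | cons b σ => exact hF b σ hσ

lemma Gm_len {F : List Bool → List Bool} {a h : ℕ}
    (hlen : ∀ σ : List Bool, σ.length < a → (F σ).length < h) (σ : List Bool)
    (hσ : σ.length ≤ a) : (Gm F σ).length ≤ h := by
  cases σ with
  | nil => simp [Gm]
  | cons b σ => exact hlen σ hσ

/-- The embedding. -/
def emb {F : List Bool → List Bool} {a h : ℕ}
    (hlen : ∀ σ : List Bool, σ.length < a → (F σ).length < h) : TVert a → TVert h
  | Sum.inl m => Sum.inl ⟨Gm F m.1, Gm_len hlen m.1 m.2⟩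
  | Sum.inr t => Sum.inr ⟨F t.1, hlen t.1 t.2⟩

lemma emb_mono {F : List Bool → List Bool} {a h : ℕ}
    (hlen : ∀ σ : List Bool, σ.length < a → (F σ).length < h)
    (hF : ∀ (b : Bool) σ, σ.length + 1 < a → (b :: F σ) <:+ F (b :: σ)) :
    IsMonotoneEmb a h (emb hlen) := by
  have coreR : ∀ (σ : List Bool) (hσ : σ.length < a) (b : Bool) (y : TVert h),
      val y <:+ F σ ∨ (∃ d, d ≠ b ∧ val y = d :: F σ) →
      ∀ (p₁ : (Tgraph h).Walk (emb hlen (Sum.inr ⟨σ, hσ⟩)) (emb hlen (Sum.inl ⟨b :: σ, hσ⟩)))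
      (p₂ : (Tgraph h).Walk (emb hlen (Sum.inr ⟨σ, hσ⟩)) y), p₁.IsPath → p₂.IsPath →
      ∀ e ∈ p₁.edges, e ∉ p₂.edges := by
    intro σ hσ b y hy p₁ p₂
    have n1 : emb hlen (Sum.inr ⟨σ, hσ⟩) ∉ D h (b :: F σ) := by
      intro hc
      have := List.IsSuffix.length_le hc
      simp [emb, val] at this
    have n2 : emb hlen (Sum.inl ⟨b :: σ, hσ⟩) ∈ D h (b :: F σ) := List.suffix_rfl
    have n3 : y ∉ D h (b :: F σ) := by
      intro hc
      rcases hy with hy | ⟨d, hd, hy⟩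
      · have := (List.IsSuffix.trans hc hy).length_le
        simp at this
      · have hc : b :: F σ <:+ val y := hc
        rw [hy] at hc
        have := hc.eq_of_length (by simp)
        simp at this
        exact hd this.symm
    refine core _ _ _ (D h (b :: F σ)) ?_ (by tauto) (by tauto) p₁ p₂
    intro x y hx hy hxy
    obtain ⟨rfl, rfl⟩ := cross b (F σ) (hlen σ hσ) x y hx hy hxy
    exact Sym2.eq_swap
  have coreL : ∀ (σ : List Bool) (hσ : σ.length + 1 < a) (b : Bool),
      ∀ (p₁ : (Tgraph h).Walk (emb hlen (Sum.inl ⟨b :: σ, hσ.le⟩))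
          (emb hlen (Sum.inr ⟨σ, hσ.le⟩)))
      (p₂ : (Tgraph h).Walk (emb hlen (Sum.inl ⟨b :: σ, hσ.le⟩))
          (emb hlen (Sum.inr ⟨b :: σ, hσ⟩))), p₁.IsPath → p₂.IsPath →
      ∀ e ∈ p₁.edges, e ∉ p₂.edges := by
    intro σ hσ b p₁ p₂
    have n1 : emb hlen (Sum.inr ⟨σ, hσ.le⟩) ∉ D h (b :: F σ) := by
      intro hc
      have := List.IsSuffix.length_le hc
      simp [emb, val] at this
    have n2 : emb hlen (Sum.inl ⟨b :: σ, hσ.le⟩) ∈ D h (b :: F σ) := List.suffix_rfl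
    have n3 : emb hlen (Sum.inr ⟨b :: σ, hσ⟩) ∈ D h (b :: F σ) := hF b σ hσ
    refine core _ _ _ (D h (b :: F σ)) ?_ (by tauto) (by tauto) p₁ p₂
    intro x y hx hy hxy
    obtain ⟨rfl, rfl⟩ := cross b (F σ) (hlen σ hσ.le) x y hx hy hxy
    rfl
  refine ⟨⟨?_, ?_⟩, rfl, ?_⟩
  · rintro (⟨m, hm⟩ | ⟨t, ht⟩) (⟨m', hm'⟩ | ⟨t', ht'⟩) he
    · simp only [emb, Sum.inl.injEq, Subtype.mk.injEq] at he
      rcases m with _ | ⟨b, m⟩ <;> rcases m' with _ | ⟨b', m'⟩ <;> simp [Gm] at he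
      · rfl
      · obtain ⟨rfl, he⟩ := he
        obtain rfl := F_inj _ hF m m' rfl hm hm' he
        rfl
    · simp [emb] at he
    · simp [emb] at he
    · simp only [emb, Sum.inr.injEq, Subtype.mk.injEq] at he
      obtain rfl := F_inj _ hF t t' rfl ht ht' he
      rfl
  · rintro (⟨m, hm⟩ | ⟨t, ht⟩) (⟨m₁, hm₁⟩ | ⟨t₁, ht₁⟩) (⟨m₂, hm₂⟩ | ⟨t₂, ht₂⟩) h1 h2 hne p₁ p₂ hp₁ hp₂
    · exact absurd h1 (adj_ll _ _)
    · exact absurd h1 (adj_ll _ _)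
    · exact absurd h2 (adj_ll _ _)
    · rcases (adj_rl _ _).1 h1.symm with e1 | ⟨b, e1⟩ <;>
      rcases (adj_rl _ _).1 h2.symm with e2 | ⟨b', e2⟩ <;> simp only at e1 e2
      · subst e1; subst e2; exact absurd rfl hne
      · subst e1; subst e2
        intro e he he'
        exact coreL t₂ ht₁ b' p₂ p₁ hp₂ hp₁ e he' he
      · subst e2; subst e1
        exact coreL t₁ ht₂ b p₁ p₂ hp₁ hp₂
      · subst e1
        simp at e2
        obtain ⟨-, rfl⟩ := e2
        exact absurd rfl hne
    · rcases (adj_rl _ _).1 h1 with e1 | ⟨b, e1⟩ <;>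
      rcases (adj_rl _ _).1 h2 with e2 | ⟨b', e2⟩ <;> simp only at e1 e2
      · subst e1; subst e2; exact absurd rfl hne
      · subst e1; subst e2
        intro e he he'
        exact coreR m₁ ht b' (emb hlen (Sum.inl ⟨m₁, hm₁⟩)) (Or.inl (Gm_suffix hF _ ht)) p₂ p₁ hp₂ hp₁ e he' he
      · subst e2; subst e1
        exact coreR m₂ ht b (emb hlen (Sum.inl ⟨m₂, hm₂⟩)) (Or.inl (Gm_suffix hF _ ht)) p₁ p₂ hp₁ hp₂
      · subst e1; subst e2
        refine coreR t ht b _ (Or.inr ⟨b', ?_, rfl⟩) p₁ p₂ hp₁ hp₂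
        rintro rfl
        exact hne rfl
    · exact absurd h2 (adj_rr _ _)
    · exact absurd h1 (adj_rr _ _)
    · exact absurd h1 (adj_rr _ _)
  · intro σ hσ
    exact ⟨F σ, hlen σ hσ, rfl, rfl, rfl⟩

end MonoEmb

/-- Lemma 5.2. For all integers `a, k ≥ 1` there is an `h` such that for
every colouring of the major vertices of `T_h` with `k` colours there is a monotone
homeomorphic embedding `T_a ↪ T_h` mapping all major vertices of `T_a` to major vertices of
the same colour. -/
theorem monochromatic_monotone_embedding (a k : ℕ) (ha : 1 ≤ a) (hk : 1 ≤ k) :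
    ∃ h : ℕ, ∀ c : JVert h → Fin k,
      ∃ γ : TVert a → TVert h, IsMonotoneEmb a h γ ∧
        ∃ col : Fin k, ∀ (σ : JVert a) (τ : JVert h),
          γ (Sum.inr σ) = Sum.inr τ → c τ = col := by
  refine ⟨k * a, fun c => ?_⟩
  let c' : List Bool → Fin k := fun l =>
    if hl : l.length + 1 ≤ k * a then c ⟨l, hl⟩ else ⟨0, hk⟩
  obtain ⟨i, hi⟩ := MonoEmb.ramsey (k * a) k hk c' (k * a) (fun _ => a) [] (by simp) (by simp)
  obtain ⟨F, h1, h2⟩ := MonoEmb.exists_F hi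
  refine ⟨MonoEmb.emb (fun σ hσ => (h1 σ hσ).1), MonoEmb.emb_mono _ h2, i, ?_⟩
  rintro ⟨σ, hσ⟩ τ hτ
  have hτ : (⟨F σ, (h1 σ hσ).1⟩ : JVert (k * a)) = τ := Sum.inr.inj hτ
  subst hτ
  have := (h1 σ hσ).2
  have hl : (F σ).length + 1 ≤ k * a := (h1 σ hσ).1
  simpa only [c', dif_pos hl] using this
end
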